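/- Let G ≤ GL₂(ℤ_p) be an N-Cartan lift with respect to the Cartan subgroup C such that dim 𝔤₁ > 1, and suppose there exists an element of G(p) ∩ C(p) whose image in PGL₂(𝔽_p) has order greater than 2. If for some n ≥ 1 one has dim 𝔤ₙ = 3, then n = 1 and G contains the principal congruence subgroup I + p²·M₂(ℤ_p). -/

import Mathlib

/-!
Both Cartan subgroups are treated at once. Modulo `p` the Cartan subgroup is `𝔽_p + 𝔽_p·T₀` with
`T₀²` a nonzero scalar, and the elements of its normaliser outside it anticommute with `T₀`
(`cartan_data`). Let `h ∈ G(p)` be such an element and `c = t + T ∈ G(p)`, with `T` a multiple of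
`T₀`, an element of projective order greater than `2`; this condition says exactly that `t` and `T`
are nonzero. Then `1, T, h, Th` is a quaternion basis of `gl₂(𝔽_p)` (`quaternion_span`).

Each `𝔤ₙ` is a subspace stable under conjugation by `h` and `c`. Conjugation by `h` separates
`⟨1, h⟩` from `⟨T, Th⟩`, and conjugation by `c` multiplies `⟨h, Th⟩` by `(t + T)²/(t² - T²)`, so
`𝔤ₙ` is the sum of its intersections with `⟨1⟩`, `⟨T⟩` and `⟨h, Th⟩`, the last being trivial or
everything (`stable_decomp`). As `G(p)` has exponent prime to `p` and the determinant is surjective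
on `G`, `𝔤₁` has an element of nonzero trace (`exists_trace_ne_zero`), so it contains `1`. Also
`𝔤ₙ ⊆ 𝔤ₙ₊₁` by taking `p`-th powers (`glSet_mono`).

If `𝔤₁` did not contain `h` and `Th`, then `dim 𝔤₁ > 1` would force `T ∈ 𝔤₁ ⊆ 𝔤ₙ`, and then
`dim 𝔤ₙ = 3` would force `h, Th ∈ 𝔤ₙ`, so `dim 𝔤ₙ = 4`, a contradiction. Hence `1, h, Th ∈ 𝔤₁`, and
the commutator `[h, Th]`, a nonzero multiple of `T`, lies in `𝔤₂` (`glSet_commutator`). So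
`𝔤ₖ = gl₂(𝔽_p)` for all `k ≥ 2`, which excludes `n ≥ 2`, and since `G` is closed, successive
approximation gives `I + p²·M₂(ℤ_p) ⊆ G` (`congruence_of_full`).
-/


open Matrix

noncomputable section

variable (p : ℕ) [Fact p.Prime]

/-- Reduction `GL₂(ℤ_p) → GL₂(ℤ/pⁿℤ)` of the matrix entries modulo `pⁿ`;
`G(pⁿ)` is the image of `G` under this map. -/
def redPow (n : ℕ) : GL (Fin 2) ℤ_[p] →* GL (Fin 2) (ZMod (p ^ n)) :=
  Matrix.GeneralLinearGroup.map (PadicInt.toZModPow n)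

/-- Reduction `GL₂(ℤ_p) → GL₂(𝔽_p)` of the matrix entries modulo `p`;
`G(p)` is the image of `G` under this map. -/
def red : GL (Fin 2) ℤ_[p] →* GL (Fin 2) (ZMod p) :=
  Matrix.GeneralLinearGroup.map (PadicInt.toZMod)

/-- The least positive integer representing a quadratic non-residue modulo `p`. -/
def epsN : ℕ := sInf {n : ℕ | 0 < n ∧ ¬ IsSquare ((n : ZMod p))}

/-- The (carrier set of the) split Cartan subgroup of `GL₂(R)`:
invertible diagonal matrices. -/
def cspSet (R : Type*) [CommRing R] : Set (GL (Fin 2) R) :=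
  {A | ∃ a b : R, (A : Matrix (Fin 2) (Fin 2) R) = !![a, 0; 0, b]}

/-- The (carrier set of the) normaliser `C_sp⁺ = C_sp ∪ [[0,1],[1,0]]·C_sp`. -/
def cspPlusSet (R : Type*) [CommRing R] : Set (GL (Fin 2) R) :=
  {A | ∃ a b : R, (A : Matrix (Fin 2) (Fin 2) R) = !![a, 0; 0, b] ∨
    (A : Matrix (Fin 2) (Fin 2) R) = !![0, 1; 1, 0] * !![a, 0; 0, b]}

/-- The (carrier set of the) non-split Cartan subgroup of `GL₂(R)`:
invertible matrices of the shape `[[a, εb], [b, a]]`.  (Over `ℤ_p`, resp. `ℤ/pⁿℤ`,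
invertibility forces `(a, b) ≢ (0, 0) mod p`.) -/
def cnsSet (R : Type*) [CommRing R] (ε : R) : Set (GL (Fin 2) R) :=
  {A | ∃ a b : R, (A : Matrix (Fin 2) (Fin 2) R) = !![a, ε * b; b, a]}

/-- The (carrier set of the) normaliser `C_ns⁺ = C_ns ∪ [[1,0],[0,-1]]·C_ns`. -/
def cnsPlusSet (R : Type*) [CommRing R] (ε : R) : Set (GL (Fin 2) R) :=
  {A | ∃ a b : R, (A : Matrix (Fin 2) (Fin 2) R) = !![a, ε * b; b, a] ∨
    (A : Matrix (Fin 2) (Fin 2) R) = !![(1 : R), 0; 0, -1] * !![a, ε * b; b, a]}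

/-- `G ≤ GL₂(ℤ_p)` is an *N-Cartan lift* with respect to the Cartan subgroup with
carrier set `C` (with normaliser carrier set `Cplus`): `G` is closed,
`det G = ℤ_p^×`, the reduction `G(p)` is contained in `C⁺(p)` but not in `C(p)`, and
`G(p)` contains an element of `C(p)` which is not a scalar multiple of the identity. -/
def IsNCartanLift (G : Subgroup (GL (Fin 2) ℤ_[p]))
    (C Cplus : Set (GL (Fin 2) ℤ_[p])) : Prop :=
  IsClosed (G : Set (GL (Fin 2) ℤ_[p])) ∧
  (∀ u : ℤ_[p]ˣ, ∃ A ∈ G, Matrix.GeneralLinearGroup.det A = u) ∧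
  (⇑(red p) '' ↑G ⊆ ⇑(red p) '' Cplus) ∧
  ¬ (⇑(red p) '' ↑G ⊆ ⇑(red p) '' C) ∧
  (∃ g ∈ (⇑(red p) '' ↑G) ∩ (⇑(red p) '' C),
    ¬ ∃ c : ZMod p,
      (g : Matrix (Fin 2) (Fin 2) (ZMod p)) = c • (1 : Matrix (Fin 2) (Fin 2) (ZMod p)))

/-- The image `𝔤ₙ` of `Gₙ/Gₙ₊₁` inside `gl₂(𝔽_p)` under `I + pⁿB ↦ (B mod p)`:
the set of reductions mod `p` of matrices `B` with `I + pⁿB ∈ G`. -/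
def glSet (n : ℕ) (G : Subgroup (GL (Fin 2) ℤ_[p])) :
    Set (Matrix (Fin 2) (Fin 2) (ZMod p)) :=
  {M | ∃ A ∈ G, ∃ B : Matrix (Fin 2) (Fin 2) ℤ_[p],
    (A : Matrix (Fin 2) (Fin 2) ℤ_[p]) = 1 + ((p : ℤ_[p]) ^ n) • B ∧
    B.map ⇑(PadicInt.toZMod (p := p)) = M}

/-- The dimension of `𝔤ₙ` as an `𝔽_p`-vector space (recall that `𝔤ₙ` is an
`𝔽_p`-subspace of `gl₂(𝔽_p)`, so it coincides with its span). -/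
def glDim (n : ℕ) (G : Subgroup (GL (Fin 2) ℤ_[p])) : ℕ :=
  Module.finrank (ZMod p) (Submodule.span (ZMod p) (glSet p n G))

/-- `V₁ = 𝔽_p · Id`. -/
def V1 : Submodule (ZMod p) (Matrix (Fin 2) (Fin 2) (ZMod p)) :=
  Submodule.span (ZMod p) {(1 : Matrix (Fin 2) (Fin 2) (ZMod p))}

/-- Non-split case: `V₂ = 𝔽_p · [[0, ε], [1, 0]]`. -/
def V2ns : Submodule (ZMod p) (Matrix (Fin 2) (Fin 2) (ZMod p)) :=
  Submodule.span (ZMod p) {!![0, (epsN p : ZMod p); 1, 0]}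

/-- Non-split case: `V₃ = 𝔽_p · [[1,0],[0,-1]] ⊕ 𝔽_p · [[0,ε],[-1,0]]`. -/
def V3ns : Submodule (ZMod p) (Matrix (Fin 2) (Fin 2) (ZMod p)) :=
  Submodule.span (ZMod p) {!![1, 0; 0, -1], !![0, (epsN p : ZMod p); -1, 0]}

/-- Split case: `V₂ = 𝔽_p · [[1,0],[0,-1]]`. -/
def V2sp : Submodule (ZMod p) (Matrix (Fin 2) (Fin 2) (ZMod p)) :=
  Submodule.span (ZMod p) {!![1, 0; 0, -1]}

/-- Split case: `V₃ = 𝔽_p · [[0,1],[1,0]] ⊕ 𝔽_p · [[0,1],[-1,0]]`. -/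
def V3sp : Submodule (ZMod p) (Matrix (Fin 2) (Fin 2) (ZMod p)) :=
  Submodule.span (ZMod p) {!![0, 1; 1, 0], !![0, 1; -1, 0]}

/-- There is an element of `G(p) ∩ C(p)` whose image in `PGL₂(𝔽_p)` has order
greater than `2`. -/
def HasLargeOrderElt (G : Subgroup (GL (Fin 2) ℤ_[p]))
    (C : Set (GL (Fin 2) ℤ_[p])) : Prop :=
  ∃ g ∈ (⇑(red p) '' ↑G) ∩ (⇑(red p) '' C),
    2 < orderOf (QuotientGroup.mk g :
      GL (Fin 2) (ZMod p) ⧸ Subgroup.center (GL (Fin 2) (ZMod p)))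

/-! ### Quaternion bases of `M₂(F)` -/

section Quaternion

variable {F : Type*} [Field F]

/-- Elements `T`, `h` with `T² = δ`, `h² = η`, `hT = -Th` and `δ, η, 2 ≠ 0` generate `M₂(F)` as a
quaternion algebra: `1, T, h, Th` span. -/
lemma quaternion_span (h2 : (2 : F) ≠ 0) {T h : Matrix (Fin 2) (Fin 2) F} {δ η : F}
    (hδ : δ ≠ 0) (hη : η ≠ 0) (hT : T * T = δ • 1) (hh : h * h = η • 1) (hTh : h * T = -(T * h))
    (w : Matrix (Fin 2) (Fin 2) F) :
    ∃ x y a b : F, w = x • 1 + y • T + a • h + b • (T * h) := by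
  have hli : LinearIndependent F ![1, T, h, T * h] := by
    rw [Fintype.linearIndependent_iff]
    intro g hg
    simp only [Fin.sum_univ_four, Matrix.cons_val] at hg
    set x := g 0
    set y := g 1
    set a := g 2
    set b := g 3
    -- Conjugating by `h` and by `T` changes signs, which isolates the four terms.
    have e1 : h * (x • 1 + y • T + a • h + b • (T * h)) + (x • 1 + y • T + a • h + b • (T * h)) * h
        = (2 * x) • h + (2 * a * η) • 1 := by
      have : h * (T * h) = -(η • T) := by
        rw [← mul_assoc, hTh, neg_mul, mul_assoc, hh, mul_smul_comm, mul_one]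
      simp only [mul_add, add_mul, mul_smul_comm, smul_mul_assoc, mul_one, one_mul, hh, hTh, this,
        mul_assoc, smul_neg]
      module
    have e2 : h * (x • 1 + y • T + a • h + b • (T * h)) - (x • 1 + y • T + a • h + b • (T * h)) * h
        = (-(2 * y)) • (T * h) + (-(2 * b * η)) • T := by
      have : h * (T * h) = -(η • T) := by
        rw [← mul_assoc, hTh, neg_mul, mul_assoc, hh, mul_smul_comm, mul_one]
      simp only [mul_add, add_mul, mul_smul_comm, smul_mul_assoc, mul_one, one_mul, hh, hTh, this,
        mul_assoc, smul_neg]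
      module
    rw [hg, mul_zero, zero_mul, add_zero] at e1
    rw [hg, mul_zero, zero_mul, sub_zero] at e2
    have key : ∀ u v : F, u • h + v • (1 : Matrix (Fin 2) (Fin 2) F) = 0 → u = 0 ∧ v = 0 := by
      intro u v huv
      have e3 : T * (u • h + v • (1 : Matrix (Fin 2) (Fin 2) F)) +
          (u • h + v • (1 : Matrix (Fin 2) (Fin 2) F)) * T = (2 * v) • T := by
        simp only [mul_add, add_mul, mul_smul_comm, smul_mul_assoc, mul_one, one_mul, hTh, smul_neg]
        module
      rw [huv, mul_zero, zero_mul, add_zero] at e3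
      have hT0 : T ≠ 0 := by
        rintro rfl
        rw [mul_zero] at hT
        exact (smul_ne_zero hδ one_ne_zero) hT.symm
      have hh0 : h ≠ 0 := by
        rintro rfl
        rw [mul_zero] at hh
        exact (smul_ne_zero hη one_ne_zero) hh.symm
      have hv : v = 0 := by
        rcases smul_eq_zero.1 e3.symm with h' | h'
        · exact (mul_eq_zero.1 h').resolve_left h2
        · exact absurd h' hT0
      subst hv
      rw [zero_smul, add_zero] at huv
      exact ⟨(smul_eq_zero.1 huv).resolve_right hh0, rfl⟩
    obtain ⟨k1, k2⟩ := key _ _ e1.symm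
    have e4 := congrArg (fun m => T * m) e2
    simp only [mul_zero, mul_add, mul_smul_comm, ← mul_assoc, hT, smul_mul_assoc, one_mul,
      smul_smul] at e4
    obtain ⟨k3, k4⟩ := key _ _ e4.symm
    have hx : x = 0 := by simpa [h2] using k1
    have ha : a = 0 := by simpa [h2, hη] using k2
    have hy : y = 0 := by simpa [h2, hδ] using k3
    have hb : b = 0 := by simpa [h2, hδ, hη] using k4
    intro i
    fin_cases i <;> assumption
  have htop := hli.span_eq_top_of_card_eq_finrank (by simp [Module.finrank_matrix])
  have hw : w ∈ Submodule.span F (Set.range ![1, T, h, T * h]) := htop ▸ Submodule.mem_top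
  obtain ⟨c, hc⟩ := (Submodule.mem_span_range_iff_exists_fun F).1 hw
  refine ⟨c 0, c 1, c 2, c 3, ?_⟩
  rw [← hc]
  simp [Fin.sum_univ_four]

/-- A subspace stable under conjugation by `h` and by `c = t + T` is the direct sum of its
intersections with `F`, `F·T` and `F·h + F·Th`, and the last of these is `0` or everything. -/
lemma stable_decomp (h2 : (2 : F) ≠ 0) {T : Matrix (Fin 2) (Fin 2) F}
    (h c : GL (Fin 2) F) {δ t : F}
    (hδ : δ ≠ 0) (ht : t ≠ 0) (hT : T * T = δ • 1)
    (hTh : (h : Matrix (Fin 2) (Fin 2) F) * T = -(T * h))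
    (hc : (c : Matrix (Fin 2) (Fin 2) F) = t • 1 + T)
    (W : Submodule F (Matrix (Fin 2) (Fin 2) F))
    (hWh : ∀ w ∈ W, (h : Matrix (Fin 2) (Fin 2) F) * w * (h⁻¹ : GL (Fin 2) F) ∈ W)
    (hWc : ∀ w ∈ W, (c : Matrix (Fin 2) (Fin 2) F) * w * (c⁻¹ : GL (Fin 2) F) ∈ W)
    {x y a b : F} (hw : x • 1 + y • T + a • (h : Matrix (Fin 2) (Fin 2) F) + b • (T * h) ∈ W) :
    x • 1 ∈ W ∧ y • T ∈ W ∧ ((a ≠ 0 ∨ b ≠ 0) →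
      (h : Matrix (Fin 2) (Fin 2) F) ∈ W ∧ T * (h : Matrix (Fin 2) (Fin 2) F) ∈ W) := by
  have hinv : (h : Matrix (Fin 2) (Fin 2) F) * (h⁻¹ : GL (Fin 2) F) = 1 := by
    rw [← Units.val_mul, mul_inv_cancel, Units.val_one]
  have cinv : (c : Matrix (Fin 2) (Fin 2) F) * (c⁻¹ : GL (Fin 2) F) = 1 := by
    rw [← Units.val_mul, mul_inv_cancel, Units.val_one]
  -- Conjugation by `h` negates `T` and `Th`.
  have split : ∀ x y a b : F,
      x • 1 + y • T + a • (h : Matrix (Fin 2) (Fin 2) F) + b • (T * h) ∈ W →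
      x • 1 + a • (h : Matrix (Fin 2) (Fin 2) F) ∈ W ∧
      y • T + b • (T * (h : Matrix (Fin 2) (Fin 2) F)) ∈ W := by
    intro x y a b hw
    have e : (h : Matrix (Fin 2) (Fin 2) F) *
        (x • 1 + y • T + a • (h : Matrix (Fin 2) (Fin 2) F) + b • (T * h)) * (h⁻¹ : GL (Fin 2) F)
        = x • 1 - y • T + a • (h : Matrix (Fin 2) (Fin 2) F) - b • (T * h) := by
      have : (h : Matrix (Fin 2) (Fin 2) F) *
          (x • 1 + y • T + a • (h : Matrix (Fin 2) (Fin 2) F) + b • (T * h))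
          = (x • 1 - y • T + a • (h : Matrix (Fin 2) (Fin 2) F) - b • (T * h)) * h := by
        simp only [mul_add, add_mul, sub_mul, mul_smul_comm, smul_mul_assoc, mul_one, one_mul,
          ← mul_assoc, hTh, neg_mul, smul_neg]
        module
      rw [this, mul_assoc, hinv, mul_one]
    have hw' := hWh _ hw
    rw [e] at hw'
    constructor
    · have := W.smul_mem (2 : F)⁻¹ (W.add_mem hw hw')
      convert this using 1
      match_scalars <;> field_simp <;> ring
    · have := W.smul_mem (2 : F)⁻¹ (W.sub_mem hw hw')
      convert this using 1
      match_scalars <;> field_simp <;> ring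
  have hd : t ^ 2 - δ ≠ 0 := by
    intro hd
    -- Otherwise `t - T` is killed by the unit `t + T`, so `T = t` commutes with `h`.
    have e : (c : Matrix (Fin 2) (Fin 2) F) * (t • 1 - T) = 0 := by
      rw [hc, add_mul, mul_sub, mul_sub, hT]
      simp only [smul_mul_assoc, mul_smul_comm, one_mul, mul_one]
      have : δ = t ^ 2 := by linear_combination -hd
      rw [this]
      module
    have e' : T = t • 1 := by
      have : (c⁻¹ : GL (Fin 2) F) * ((c : Matrix (Fin 2) (Fin 2) F) * (t • 1 - T)) = 0 := by
        rw [e, mul_zero]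
      rw [← mul_assoc, ← Units.val_mul, inv_mul_cancel, Units.val_one, one_mul] at this
      exact (sub_eq_zero.1 this).symm
    rw [e'] at hTh
    simp only [smul_mul_assoc, mul_smul_comm, one_mul, mul_one] at hTh
    have h4 : (2 * t) • (h : Matrix (Fin 2) (Fin 2) F) = 0 := by
      rw [two_mul, add_smul]
      nth_rw 1 [hTh]
      simp
    rcases smul_eq_zero.1 h4 with h5 | h5
    · exact (mul_ne_zero h2 ht) h5
    · exact h.ne_zero h5
  -- Conjugation by `c` is left multiplication by `(t + T)² / (t² - δ)` on `F·h + F·Th`.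
  have conj : ∀ a b : F, ∀ z : Matrix (Fin 2) (Fin 2) F, z * T = T * z →
      z + (a • (h : Matrix (Fin 2) (Fin 2) F) + b • (T * h)) ∈ W →
      (a * δ + b * δ * t) • (h : Matrix (Fin 2) (Fin 2) F) + (a * t + b * δ) • (T * h) ∈ W := by
    intro a b z hz hw
    have e : (c : Matrix (Fin 2) (Fin 2) F) *
        (z + (a • (h : Matrix (Fin 2) (Fin 2) F) + b • (T * h))) * (c⁻¹ : GL (Fin 2) F)
        = z + (a • (h : Matrix (Fin 2) (Fin 2) F) + b • (T * h)) + (2 / (t ^ 2 - δ)) •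
          ((a * δ + b * δ * t) • (h : Matrix (Fin 2) (Fin 2) F) + (a * t + b * δ) • (T * h)) := by
      have hTTh : T * (T * (h : Matrix (Fin 2) (Fin 2) F)) = δ • h := by
        rw [← mul_assoc, hT, smul_mul_assoc, one_mul]
      have hThT : T * (h : Matrix (Fin 2) (Fin 2) F) * T = -(δ • h) := by
        rw [mul_assoc, hTh, mul_neg, hTTh]
      have : (c : Matrix (Fin 2) (Fin 2) F) *
          (z + (a • (h : Matrix (Fin 2) (Fin 2) F) + b • (T * h)))
          = (z + (a • (h : Matrix (Fin 2) (Fin 2) F) + b • (T * h)) + (2 / (t ^ 2 - δ)) •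
          ((a * δ + b * δ * t) • (h : Matrix (Fin 2) (Fin 2) F) + (a * t + b * δ) • (T * h))) *
            c := by
        rw [hc]
        simp only [mul_add, add_mul, mul_smul_comm, smul_mul_assoc, mul_one, one_mul,
          hTh, hTTh, hThT, smul_neg, smul_add, hz]
        match_scalars <;> field_simp <;> ring
      rw [this, mul_assoc, cinv, mul_one]
    have hw' := W.sub_mem (hWc _ hw) hw
    rw [e, add_sub_cancel_left] at hw'
    have := W.smul_mem (2 / (t ^ 2 - δ))⁻¹ hw'
    rwa [smul_smul, inv_mul_cancel₀ (div_ne_zero h2 hd), one_smul] at this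
  have scale : ∀ {r : F} {m : Matrix (Fin 2) (Fin 2) F}, r ≠ 0 → r • m ∈ W → m ∈ W :=
    fun hr hm => (W.smul_mem_iff hr).1 hm
  have fin : ∀ r s : F, r • (h : Matrix (Fin 2) (Fin 2) F) + s • (T * h) ∈ W →
      r • (h : Matrix (Fin 2) (Fin 2) F) ∈ W ∧ s • (T * (h : Matrix (Fin 2) (Fin 2) F)) ∈ W := by
    intro r s hrs
    have := split 0 0 r s (by simpa using hrs)
    simpa using this
  obtain ⟨w1, w2⟩ := split x y a b hw
  have u1 := fin _ _ (conj a 0 (x • 1) (by simp) (by simpa using w1))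
  have u2 := fin _ _ (conj 0 b (y • T) (by simp) (by simpa using w2))
  simp only [zero_mul, add_zero, zero_add] at u1 u2
  have ga : a ≠ 0 → (h : Matrix (Fin 2) (Fin 2) F) ∈ W ∧ T * (h : Matrix (Fin 2) (Fin 2) F) ∈ W :=
    fun h0 => ⟨scale (mul_ne_zero h0 hδ) u1.1, scale (mul_ne_zero h0 ht) u1.2⟩
  have gb : b ≠ 0 → (h : Matrix (Fin 2) (Fin 2) F) ∈ W ∧ T * (h : Matrix (Fin 2) (Fin 2) F) ∈ W :=
    fun h0 => ⟨scale (mul_ne_zero (mul_ne_zero h0 hδ) ht) u2.1, scale (mul_ne_zero h0 hδ) u2.2⟩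
  refine ⟨?_, ?_, fun hab => hab.elim ga gb⟩
  · by_cases h0 : a = 0
    · simpa [h0] using w1
    · simpa using W.sub_mem w1 (W.smul_mem a (ga h0).1)
  · by_cases h0 : b = 0
    · simpa [h0] using w2
    · simpa using W.sub_mem w2 (W.smul_mem b (gb h0).2)

/-- A matrix anticommuting with an invertible `T` is traceless, hence squares to a scalar. -/
lemma sq_scalar_of_anticomm (h2 : (2 : F) ≠ 0) {T h : Matrix (Fin 2) (Fin 2) F} {δ : F}
    (hδ : δ ≠ 0) (hT : T * T = δ • 1) (hTh : h * T = -(T * h)) :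
    h.trace = 0 ∧ h * h = (-h.det) • 1 := by
  have htr : h.trace = 0 := by
    have e : (h * T * T).trace = -(h * T * T).trace := by
      conv_lhs => rw [hTh, neg_mul, Matrix.trace_neg, Matrix.trace_mul_comm, ← mul_assoc,
        Matrix.trace_mul_comm, ← mul_assoc]
    have e' : (h * T * T).trace = δ * h.trace := by
      rw [mul_assoc, hT, mul_smul_comm, mul_one, Matrix.trace_smul, smul_eq_mul]
    have : 2 * (δ * h.trace) = 0 := by rw [← e']; linear_combination e
    simpa [h2, hδ] using this
  refine ⟨htr, ?_⟩
  rw [Matrix.trace_fin_two] at htr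
  have h11 : h 1 1 = -h 0 0 := by linear_combination htr
  ext i j
  fin_cases i <;> fin_cases j <;>
    simp [Matrix.mul_apply, Fin.sum_univ_two, Matrix.det_fin_two, h11] <;> ring

end Quaternion

/-! ### The filtration `𝔤ₙ` -/

/-- Entrywise reduction `M₂(ℤ_p) → M₂(𝔽_p)`. -/
abbrev redMat : Matrix (Fin 2) (Fin 2) ℤ_[p] →+* Matrix (Fin 2) (Fin 2) (ZMod p) :=
  (PadicInt.toZMod (p := p)).mapMatrix

lemma coe_red (A : GL (Fin 2) ℤ_[p]) :
    (red p A : Matrix (Fin 2) (Fin 2) (ZMod p)) = redMat p A := rfl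

lemma redMat_smul (c : ℤ_[p]) (B : Matrix (Fin 2) (Fin 2) ℤ_[p]) :
    redMat p (c • B) = PadicInt.toZMod c • redMat p B := by
  ext i j; simp

lemma toZMod_p : PadicInt.toZMod (p : ℤ_[p]) = 0 := by simp

lemma redMat_eq_zero {B : Matrix (Fin 2) (Fin 2) ℤ_[p]} (h : redMat p B = 0) :
    ∃ B', B = (p : ℤ_[p]) • B' := by
  have : ∀ i j, ∃ c, B i j = (p : ℤ_[p]) * c := by
    intro i j
    have hij : PadicInt.toZMod (B i j) = 0 := by
      simpa using congrFun (congrFun h i) j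
    rw [← RingHom.mem_ker, PadicInt.ker_toZMod, PadicInt.maximalIdeal_eq_span_p,
      Ideal.mem_span_singleton] at hij
    exact hij
  choose c hc using this
  exact ⟨Matrix.of c, by ext i j; simp [hc]⟩

lemma mem_glSet {n : ℕ} {G : Subgroup (GL (Fin 2) ℤ_[p])}
    {M : Matrix (Fin 2) (Fin 2) (ZMod p)} :
    M ∈ glSet p n G ↔ ∃ A ∈ G, ∃ B : Matrix (Fin 2) (Fin 2) ℤ_[p],
      (A : Matrix (Fin 2) (Fin 2) ℤ_[p]) = 1 + ((p : ℤ_[p]) ^ n) • B ∧ redMat p B = M :=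
  Iff.rfl

lemma redMat_pow_smul {n : ℕ} (hn : 1 ≤ n) (B : Matrix (Fin 2) (Fin 2) ℤ_[p]) :
    redMat p (((p : ℤ_[p]) ^ n) • B) = 0 := by
  rw [redMat_smul, map_pow, toZMod_p, zero_pow (by omega), zero_smul]

lemma glSet_add {n : ℕ} (hn : 1 ≤ n) {G : Subgroup (GL (Fin 2) ℤ_[p])}
    {M N : Matrix (Fin 2) (Fin 2) (ZMod p)} (hM : M ∈ glSet p n G) (hN : N ∈ glSet p n G) :
    M + N ∈ glSet p n G := by
  obtain ⟨A, hA, B, hAB, rfl⟩ := (mem_glSet p).1 hM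
  obtain ⟨A', hA', B', hAB', rfl⟩ := (mem_glSet p).1 hN
  refine (mem_glSet p).2 ⟨A * A', G.mul_mem hA hA', B + B' + ((p : ℤ_[p]) ^ n) • (B * B'), ?_, ?_⟩
  · rw [Units.val_mul, hAB, hAB']
    simp only [mul_add, add_mul, mul_one, one_mul, smul_mul_assoc, mul_smul_comm, smul_add]
    abel
  · rw [map_add, map_add, redMat_pow_smul p hn, add_zero]

lemma glSet_zero (n : ℕ) (G : Subgroup (GL (Fin 2) ℤ_[p])) : 0 ∈ glSet p n G :=
  (mem_glSet p).2 ⟨1, G.one_mem, 0, by simp, by simp⟩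

lemma glSet_smul {n : ℕ} (hn : 1 ≤ n) {G : Subgroup (GL (Fin 2) ℤ_[p])} (c : ZMod p)
    {M : Matrix (Fin 2) (Fin 2) (ZMod p)} (hM : M ∈ glSet p n G) : c • M ∈ glSet p n G := by
  have : ∀ k : ℕ, (k : ZMod p) • M ∈ glSet p n G := by
    intro k
    induction k with
    | zero => simpa using glSet_zero p n G
    | succ k ih =>
      rw [Nat.cast_succ, add_smul, one_smul]
      exact glSet_add p hn ih hM
  simpa using this c.val

/-- `𝔤ₙ` (for `n ≥ 1`) as an `𝔽_p`-subspace of `gl₂(𝔽_p)`. -/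
def glSub {n : ℕ} (hn : 1 ≤ n) (G : Subgroup (GL (Fin 2) ℤ_[p])) :
    Submodule (ZMod p) (Matrix (Fin 2) (Fin 2) (ZMod p)) where
  carrier := glSet p n G
  add_mem' := glSet_add p hn
  zero_mem' := glSet_zero p n G
  smul_mem' c _ hM := glSet_smul p hn c hM

lemma mem_glSub {n : ℕ} (hn : 1 ≤ n) {G : Subgroup (GL (Fin 2) ℤ_[p])}
    {M : Matrix (Fin 2) (Fin 2) (ZMod p)} : M ∈ glSub p hn G ↔ M ∈ glSet p n G := Iff.rfl

lemma glDim_eq {n : ℕ} (hn : 1 ≤ n) (G : Subgroup (GL (Fin 2) ℤ_[p])) :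
    glDim p n G = Module.finrank (ZMod p) (glSub p hn G) := by
  have : Submodule.span (ZMod p) (glSet p n G) = glSub p hn G := Submodule.span_eq (glSub p hn G)
  rw [glDim, this]

lemma glSet_conj {n : ℕ} {G : Subgroup (GL (Fin 2) ℤ_[p])} {g : GL (Fin 2) ℤ_[p]} (hg : g ∈ G)
    {M : Matrix (Fin 2) (Fin 2) (ZMod p)} (hM : M ∈ glSet p n G) :
    (red p g : Matrix (Fin 2) (Fin 2) (ZMod p)) * M *
      ((red p g)⁻¹ : GL (Fin 2) (ZMod p)) ∈ glSet p n G := by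
  obtain ⟨A, hA, B, hAB, rfl⟩ := (mem_glSet p).1 hM
  refine (mem_glSet p).2 ⟨g * A * g⁻¹, G.mul_mem (G.mul_mem hg hA) (G.inv_mem hg),
    (g : Matrix (Fin 2) (Fin 2) ℤ_[p]) * B * (g⁻¹ : GL (Fin 2) ℤ_[p]), ?_, ?_⟩
  · rw [Units.val_mul, Units.val_mul, hAB]
    simp only [mul_add, add_mul, mul_one, smul_mul_assoc, mul_smul_comm]
    rw [← Units.val_mul, mul_inv_cancel, Units.val_one]
  · rw [← map_inv, coe_red, coe_red, map_mul, map_mul]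

lemma exists_one_add_pow {R : Type*} [Ring R] (x : R) (m : ℕ) :
    ∃ r, (1 + x) ^ m = 1 + m * x + (m.choose 2 : R) * x ^ 2 + r * x ^ 3 := by
  induction m with
  | zero => exact ⟨0, by simp⟩
  | succ m ih =>
    obtain ⟨r, hr⟩ := ih
    refine ⟨(m.choose 2 : R) + r + r * x, ?_⟩
    rw [pow_succ, hr, Nat.choose_succ_succ' m 1, Nat.choose_one_right]
    push_cast
    noncomm_ring

/-- Raising to the `p`-th power maps `I + pⁿB` to `I + pⁿ⁺¹B` modulo `pⁿ⁺²`, since `p` is odd. -/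
lemma glSet_mono_succ (hp : Odd p) {n : ℕ} (hn : 1 ≤ n) {G : Subgroup (GL (Fin 2) ℤ_[p])}
    {M : Matrix (Fin 2) (Fin 2) (ZMod p)} (hM : M ∈ glSet p n G) : M ∈ glSet p (n + 1) G := by
  obtain ⟨A, hA, B, hAB, rfl⟩ := (mem_glSet p).1 hM
  obtain ⟨r, hr⟩ := exists_one_add_pow (((p : ℤ_[p]) ^ n) • B) p
  obtain ⟨k, hk⟩ := hp
  have hch : p.choose 2 = p * k := by
    rw [Nat.choose_two_right, hk, Nat.add_sub_cancel]
    rw [show (2 * k + 1) * (2 * k) = 2 * ((2 * k + 1) * k) by ring, Nat.mul_div_cancel_left _ two_pos]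
  obtain ⟨m, rfl⟩ : ∃ m, n = m + 1 := ⟨n - 1, by omega⟩
  refine (mem_glSet p).2 ⟨A ^ p, G.pow_mem hA p, B + (p : ℤ_[p]) •
    (((k : ℤ_[p]) * (p : ℤ_[p]) ^ m) • B ^ 2 + ((p : ℤ_[p]) ^ (2 * m)) • (r * B ^ 3)), ?_, ?_⟩
  · rw [Units.val_pow_eq_pow_val, hAB, hr, hch]
    have c1 : ∀ (c : ℕ) (X : Matrix (Fin 2) (Fin 2) ℤ_[p]),
        (c : Matrix (Fin 2) (Fin 2) ℤ_[p]) * X = (c : ℤ_[p]) • X := by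
      intro c X
      rw [← nsmul_eq_mul, Nat.cast_smul_eq_nsmul]
    rw [c1, c1, smul_pow, smul_pow, mul_smul_comm]
    push_cast
    match_scalars <;> ring
  · rw [map_add, redMat_smul, toZMod_p, zero_smul, add_zero]

lemma glSet_mono (hp : Odd p) {m n : ℕ} (hm : 1 ≤ m) (hmn : m ≤ n)
    {G : Subgroup (GL (Fin 2) ℤ_[p])} {M : Matrix (Fin 2) (Fin 2) (ZMod p)}
    (hM : M ∈ glSet p m G) : M ∈ glSet p n G := by
  induction n, hmn using Nat.le_induction with
  | base => exact hM
  | succ n hn ih => exact glSet_mono_succ p hp (hm.trans hn) ih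

lemma inv_of_congr_one {n : ℕ} (E : GL (Fin 2) ℤ_[p]) {B : Matrix (Fin 2) (Fin 2) ℤ_[p]}
    (hE : (E : Matrix (Fin 2) (Fin 2) ℤ_[p]) = 1 + ((p : ℤ_[p]) ^ n) • B) :
    ((E⁻¹ : GL (Fin 2) ℤ_[p]) : Matrix (Fin 2) (Fin 2) ℤ_[p]) =
      1 + ((p : ℤ_[p]) ^ n) • (-(B * (E⁻¹ : GL (Fin 2) ℤ_[p]))) := by
  have h1 : (E : Matrix (Fin 2) (Fin 2) ℤ_[p]) * (E⁻¹ : GL (Fin 2) ℤ_[p]) = 1 := by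
    rw [← Units.val_mul, mul_inv_cancel, Units.val_one]
  rw [hE, add_mul, one_mul, smul_mul_assoc] at h1
  rw [smul_neg, ← h1]
  abel

/-- The commutator of `I + pA` and `I + pB` is `I + p²[A, B]` modulo `p³`. -/
lemma glSet_commutator {G : Subgroup (GL (Fin 2) ℤ_[p])}
    {M N : Matrix (Fin 2) (Fin 2) (ZMod p)} (hM : M ∈ glSet p 1 G) (hN : N ∈ glSet p 1 G) :
    M * N - N * M ∈ glSet p 2 G := by
  obtain ⟨X, hX, A, hXA, rfl⟩ := (mem_glSet p).1 hM
  obtain ⟨Y, hY, B, hYB, rfl⟩ := (mem_glSet p).1 hN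
  refine (mem_glSet p).2 ⟨X * Y * (Y * X)⁻¹, G.mul_mem (G.mul_mem hX hY)
    (G.inv_mem (G.mul_mem hY hX)), (A * B - B * A) * ((Y * X)⁻¹ : GL (Fin 2) ℤ_[p]), ?_, ?_⟩
  · have e : ((X * Y : GL (Fin 2) ℤ_[p]) : Matrix (Fin 2) (Fin 2) ℤ_[p]) =
        (Y * X : GL (Fin 2) ℤ_[p]) + ((p : ℤ_[p]) ^ 2) • (A * B - B * A) := by
      rw [Units.val_mul, Units.val_mul, hXA, hYB]
      simp only [mul_add, add_mul, mul_one, one_mul, smul_mul_assoc, mul_smul_comm]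
      module
    rw [Units.val_mul, e, add_mul, ← Units.val_mul, mul_inv_cancel, Units.val_one, smul_mul_assoc]
  · have hYX : red p (Y * X) = 1 := by
      ext1
      rw [coe_red, Units.val_mul, map_mul, hXA, hYB, map_add, map_add, redMat_pow_smul p le_rfl,
        redMat_pow_smul p le_rfl]
      simp
    rw [map_mul, ← coe_red, map_inv, hYX, inv_one, Units.val_one, mul_one, map_sub, map_mul, map_mul]

/-! ### From full graded pieces to a congruence subgroup -/

lemma tendsto_one_add_pow (B : ℕ → Matrix (Fin 2) (Fin 2) ℤ_[p]) :
    Filter.Tendsto (fun k => (1 : Matrix (Fin 2) (Fin 2) ℤ_[p]) + ((p : ℤ_[p]) ^ k) • B k)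
      Filter.atTop (nhds 1) := by
  have : Filter.Tendsto (fun k => ((p : ℤ_[p]) ^ k) • B k) Filter.atTop (nhds 0) := by
    refine tendsto_pi_nhds.2 fun i => tendsto_pi_nhds.2 fun j => ?_
    have hlt : ‖(p : ℤ_[p])‖ < 1 :=
      PadicInt.norm_lt_one_iff_dvd _ |>.2 dvd_rfl
    refine squeeze_zero_norm (a := fun k => ‖(p : ℤ_[p])‖ ^ k) ?_
      (tendsto_pow_atTop_nhds_zero_of_lt_one (norm_nonneg _) hlt)
    intro k
    rw [Matrix.smul_apply, smul_eq_mul, norm_mul, norm_pow]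
    exact mul_le_of_le_one_right (by positivity) (PadicInt.norm_le_one _)
  simpa using tendsto_const_nhds.add this

lemma tendsto_units_one (E : ℕ → GL (Fin 2) ℤ_[p]) (B : ℕ → Matrix (Fin 2) (Fin 2) ℤ_[p])
    (hE : ∀ k, (E k : Matrix (Fin 2) (Fin 2) ℤ_[p]) = 1 + ((p : ℤ_[p]) ^ k) • B k) :
    Filter.Tendsto E Filter.atTop (nhds 1) := by
  rw [Units.isInducing_embedProduct.tendsto_nhds_iff, map_one]
  refine Filter.Tendsto.prodMk_nhds ?_ ?_
  · simp only [hE]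
    exact tendsto_one_add_pow p B
  · refine (MulOpposite.continuous_op.tendsto 1).comp
      ((tendsto_one_add_pow p fun k => -(B k * ((E k)⁻¹ : GL (Fin 2) ℤ_[p]))).congr fun k => ?_)
    exact (inv_of_congr_one p (E k) (hE k)).symm

/-- Successive approximation: a closed `G` with `𝔤_k = gl₂(𝔽_p)` for all `k ≥ m` contains every
matrix congruent to `1` modulo `p^m`. -/
lemma congruence_of_full {G : Subgroup (GL (Fin 2) ℤ_[p])}
    (hG : IsClosed (G : Set (GL (Fin 2) ℤ_[p]))) {m : ℕ} (hm : 1 ≤ m)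
    (hfull : ∀ k, m ≤ k → ∀ M, M ∈ glSet p k G) (B : Matrix (Fin 2) (Fin 2) ℤ_[p]) :
    ∃ A ∈ G, (A : Matrix (Fin 2) (Fin 2) ℤ_[p]) = 1 + ((p : ℤ_[p]) ^ m) • B := by
  have hdet : IsUnit (1 + ((p : ℤ_[p]) ^ m) • B).det := by
    have h1 : PadicInt.toZMod (1 + ((p : ℤ_[p]) ^ m) • B).det ≠ 0 := by
      rw [RingHom.map_det]
      change (redMat p _).det ≠ 0
      rw [map_add, map_one, redMat_pow_smul p hm, add_zero, Matrix.det_one]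
      exact one_ne_zero
    by_contra hu
    apply h1
    rwa [← RingHom.mem_ker, PadicInt.ker_toZMod, IsLocalRing.mem_maximalIdeal, mem_nonunits_iff]
  let U : GL (Fin 2) ℤ_[p] := Matrix.GeneralLinearGroup.mk'' _ hdet
  have hU : (U : Matrix (Fin 2) (Fin 2) ℤ_[p]) = 1 + ((p : ℤ_[p]) ^ m) • B := rfl
  have approx : ∀ k, ∃ A ∈ G, ∃ C : Matrix (Fin 2) (Fin 2) ℤ_[p],
      ((A⁻¹ * U : GL (Fin 2) ℤ_[p]) : Matrix (Fin 2) (Fin 2) ℤ_[p]) =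
        1 + ((p : ℤ_[p]) ^ (m + k)) • C := by
    intro k
    induction k with
    | zero => exact ⟨1, G.one_mem, B, by simp [hU]⟩
    | succ k ih =>
      obtain ⟨A, hA, C, hC⟩ := ih
      obtain ⟨X, hX, D, hXD, hD⟩ := (mem_glSet p).1 (hfull (m + k) (by omega) (redMat p C))
      obtain ⟨C', hC'⟩ := redMat_eq_zero p (B := C - D) (by rw [map_sub, hD, sub_self])
      refine ⟨A * X, G.mul_mem hA hX, (X⁻¹ : GL (Fin 2) ℤ_[p]) * C', ?_⟩
      rw [_root_.mul_inv_rev, mul_assoc, Units.val_mul, hC]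
      have e : 1 + ((p : ℤ_[p]) ^ (m + k)) • C =
          (X : Matrix (Fin 2) (Fin 2) ℤ_[p]) + ((p : ℤ_[p]) ^ (m + (k + 1))) • C' := by
        rw [hXD, ← sub_add_cancel C D, hC', ← add_assoc m k 1, pow_succ, smul_add, smul_smul]
        abel
      rw [e, mul_add, ← Units.val_mul, inv_mul_cancel, Units.val_one, mul_smul_comm]
  choose A hA C hC using approx
  refine ⟨U, ?_, hU⟩
  have hlim := tendsto_units_one p (fun k => (A k)⁻¹ * U) (fun k => ((p : ℤ_[p]) ^ m) • C k)
    (fun k => by rw [hC, smul_smul, ← pow_add, add_comm k m])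
  have hlim' : Filter.Tendsto A Filter.atTop (nhds U) := by
    have := (tendsto_const_nhds (x := U)).mul hlim.inv
    simpa using this
  exact hG.mem_of_tendsto hlim' (Filter.Eventually.of_forall hA)

/-! ### The Cartan subgroup modulo `p` -/

lemma two_ne_zero_zmod (hp : Odd p) : (2 : ZMod p) ≠ 0 := by
  intro h
  have h2 : p ∣ 2 := (ZMod.natCast_eq_zero_iff 2 p).1 (by exact_mod_cast h)
  have := (Nat.prime_dvd_prime_iff_eq Fact.out Nat.prime_two).1 h2
  subst this
  exact absurd hp (by decide)

lemma epsN_ne_zero (hp : Odd p) : (epsN p : ZMod p) ≠ 0 := by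
  have hne : {n : ℕ | 0 < n ∧ ¬ IsSquare ((n : ZMod p))}.Nonempty := by
    obtain ⟨a, ha⟩ := FiniteField.exists_nonsquare (F := ZMod p) (by
      rw [ZMod.ringChar_zmod_n]
      rintro rfl
      exact absurd hp (by decide))
    have ha0 : a ≠ 0 := by
      rintro rfl
      exact ha (IsSquare.zero)
    refine ⟨a.val, ?_, ?_⟩
    · exact Nat.pos_of_ne_zero (by simpa using ha0)
    · simpa using ha
  have h := (Nat.sInf_mem hne).2
  intro h0
  change ¬ IsSquare ((epsN p : ℕ) : ZMod p) at h
  rw [h0] at h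
  exact h IsSquare.zero

/-- Both Cartan subgroups have, modulo `p`, the form `𝔽_p + 𝔽_p·T` with `T²` a nonzero scalar, and
the elements of the normaliser outside the Cartan subgroup anticommute with `T`. -/
lemma cartan_data (hp : Odd p) {C Cplus : Set (GL (Fin 2) ℤ_[p])}
    (hC : (C = cspSet ℤ_[p] ∧ Cplus = cspPlusSet ℤ_[p]) ∨
      (C = cnsSet ℤ_[p] ((epsN p : ℤ_[p])) ∧ Cplus = cnsPlusSet ℤ_[p] ((epsN p : ℤ_[p])))) :
    ∃ (T : Matrix (Fin 2) (Fin 2) (ZMod p)) (δ : ZMod p), δ ≠ 0 ∧ T * T = δ • 1 ∧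
      (∀ k ∈ C, ∃ t y : ZMod p,
        (red p k : Matrix (Fin 2) (Fin 2) (ZMod p)) = t • 1 + y • T) ∧
      (∀ k ∈ Cplus, k ∈ C ∨
        (red p k : Matrix (Fin 2) (Fin 2) (ZMod p)) * T = -(T * red p k)) := by
  have h2 := two_ne_zero_zmod p hp
  rcases hC with ⟨rfl, rfl⟩ | ⟨rfl, rfl⟩
  · refine ⟨!![1, 0; 0, -1], 1, one_ne_zero, ?_, ?_, ?_⟩
    · ext i j; fin_cases i <;> fin_cases j <;> simp
    · rintro k ⟨a, b, hk⟩
      refine ⟨(PadicInt.toZMod a + PadicInt.toZMod b) / 2,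
        (PadicInt.toZMod a - PadicInt.toZMod b) / 2, ?_⟩
      rw [coe_red, hk]
      ext i j; fin_cases i <;> fin_cases j <;> simp <;> field_simp <;> ring
    · rintro k ⟨a, b, hk | hk⟩
      · exact Or.inl ⟨a, b, hk⟩
      · right
        rw [coe_red, hk]
        ext i j; fin_cases i <;> fin_cases j <;>
          simp [Matrix.mul_apply, Matrix.vecMul, dotProduct, Fin.sum_univ_two]
  · refine ⟨!![0, (epsN p : ZMod p); 1, 0], epsN p, epsN_ne_zero p hp, ?_, ?_, ?_⟩
    · ext i j; fin_cases i <;> fin_cases j <;> simp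
    · rintro k ⟨a, b, hk⟩
      refine ⟨PadicInt.toZMod a, PadicInt.toZMod b, ?_⟩
      rw [coe_red, hk]
      ext i j; fin_cases i <;> fin_cases j <;> simp [mul_comm]
    · rintro k ⟨a, b, hk | hk⟩
      · exact Or.inl ⟨a, b, hk⟩
      · right
        rw [coe_red, hk]
        ext i j; fin_cases i <;> fin_cases j <;>
          simp [Matrix.mul_apply, Matrix.vecMul, dotProduct, Fin.sum_univ_two] <;> ring

/-- Invertible elements of `𝔽_p + 𝔽_p·T` have order dividing `p² - 1`, being fixed by the square
of Frobenius. -/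
lemma pow_eq_one_of_cartan (hp : Odd p) {T : Matrix (Fin 2) (Fin 2) (ZMod p)} {δ : ZMod p}
    (hδ : δ ≠ 0) (hT : T * T = δ • 1) (X : GL (Fin 2) (ZMod p)) {t y : ZMod p}
    (hX : (X : Matrix (Fin 2) (Fin 2) (ZMod p)) = t • 1 + y • T) : X ^ (p ^ 2 - 1) = 1 := by
  have hp1 : 1 ≤ p ^ 2 := Nat.one_le_pow _ _ (Nat.Prime.pos Fact.out)
  have hTp : T ^ (p ^ 2) = T := by
    obtain ⟨k, hk⟩ := hp
    have e : p ^ 2 = 2 * ((p - 1) * (k + 1)) + 1 := by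
      rw [hk, Nat.add_sub_cancel]; ring
    rw [e, pow_succ, pow_mul, pow_two, hT, smul_pow, one_pow, pow_mul,
      ZMod.pow_card_sub_one_eq_one hδ, one_pow, one_smul, one_mul]
  have hc : ∀ c : ZMod p, c ^ (p ^ 2) = c := by
    intro c; rw [pow_two, pow_mul, ZMod.pow_card, ZMod.pow_card]
  have hXp : X ^ (p ^ 2) = X := by
    ext1
    rw [Units.val_pow_eq_pow_val, hX, add_pow_char_pow_of_commute, smul_pow, smul_pow, one_pow, hTp,
      hc, hc]
    exact ((Commute.one_left T).smul_left t).smul_right y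
  have h := hXp
  rw [← Nat.sub_add_cancel hp1, pow_succ] at h
  exact mul_eq_right.1 h

/-- Some element of `𝔤₁` has nonzero trace: a power, of exponent prime to `p`, of an element of
determinant `1 + p` lies in `G₁`. -/
lemma exists_trace_ne_zero (hp : Odd p) {G : Subgroup (GL (Fin 2) ℤ_[p])}
    (hdet : ∀ u : ℤ_[p]ˣ, ∃ A ∈ G, Matrix.GeneralLinearGroup.det A = u)
    (hpow : ∀ A ∈ G, red p A ^ (2 * (p ^ 2 - 1)) = 1) :
    ∃ M ∈ glSet p 1 G, M.trace ≠ 0 := by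
  have hu : IsUnit (1 + (p : ℤ_[p])) := by
    by_contra h
    rw [← mem_nonunits_iff, ← IsLocalRing.mem_maximalIdeal, ← PadicInt.ker_toZMod,
      RingHom.mem_ker] at h
    simp at h
  obtain ⟨A, hA, hAu⟩ := hdet hu.unit
  set m := 2 * (p ^ 2 - 1) with hm
  have hred : redMat p ((A ^ m : GL (Fin 2) ℤ_[p]) : Matrix (Fin 2) (Fin 2) ℤ_[p]) = 1 := by
    rw [← coe_red, map_pow, hpow A hA, Units.val_one]
  obtain ⟨B, hB⟩ := redMat_eq_zero p
    (B := ((A ^ m : GL (Fin 2) ℤ_[p]) : Matrix (Fin 2) (Fin 2) ℤ_[p]) - 1)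
    (by rw [map_sub, hred, map_one, sub_self])
  have hB' : ((A ^ m : GL (Fin 2) ℤ_[p]) : Matrix (Fin 2) (Fin 2) ℤ_[p])
      = 1 + ((p : ℤ_[p]) ^ 1) • B := by
    rw [pow_one, ← hB]; abel
  refine ⟨redMat p B, (mem_glSet p).2 ⟨A ^ m, G.pow_mem hA m, B, hB', rfl⟩, ?_⟩
  have hd : ((A ^ m : GL (Fin 2) ℤ_[p]) : Matrix (Fin 2) (Fin 2) ℤ_[p]).det
      = (1 + (p : ℤ_[p])) ^ m := by
    have : (A : Matrix (Fin 2) (Fin 2) ℤ_[p]).det = 1 + (p : ℤ_[p]) := by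
      have := congrArg Units.val hAu
      simpa using this
    rw [Units.val_pow_eq_pow_val, Matrix.det_pow, this]
  obtain ⟨r, hr⟩ := exists_one_add_pow (p : ℤ_[p]) m
  rw [hB', hr, Matrix.det_fin_two] at hd
  simp only [Matrix.add_apply, Matrix.smul_apply, smul_eq_mul, Matrix.one_apply_eq, pow_one,
    Matrix.one_apply_ne (show (0 : Fin 2) ≠ 1 by decide),
    Matrix.one_apply_ne (show (1 : Fin 2) ≠ 0 by decide), zero_add] at hd
  have hp0 : (p : ℤ_[p]) ≠ 0 := by exact_mod_cast (Nat.Prime.ne_zero Fact.out)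
  -- Comparing determinants modulo `p²`.
  have htr : B 0 0 + B 1 1 = (m : ℤ_[p]) + (p : ℤ_[p]) *
      ((m.choose 2 : ℤ_[p]) + r * (p : ℤ_[p]) - (B 0 0 * B 1 1 - B 0 1 * B 1 0)) := by
    apply mul_left_cancel₀ hp0
    linear_combination hd
  have hm2 : (m : ZMod p) = -2 := by
    rw [hm, Nat.cast_mul, Nat.cast_sub (Nat.one_le_pow _ _ (Nat.Prime.pos Fact.out))]
    simp
  have htr' := congrArg (PadicInt.toZMod (p := p)) htr
  rw [map_add, map_add, map_mul, toZMod_p, zero_mul, add_zero, map_natCast, hm2] at htr'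
  rw [Matrix.trace_fin_two]
  change PadicInt.toZMod (B 0 0) + PadicInt.toZMod (B 1 1) ≠ 0
  rw [htr']
  exact neg_ne_zero.2 (two_ne_zero_zmod p hp)

/-- A matrix whose square is scalar has projective order at most `2`. -/
lemma orderOf_le_two_of_sq_scalar (c : GL (Fin 2) (ZMod p)) {s : ZMod p}
    (hs : (c : Matrix (Fin 2) (Fin 2) (ZMod p)) * c = s • 1) :
    orderOf (QuotientGroup.mk c :
      GL (Fin 2) (ZMod p) ⧸ Subgroup.center (GL (Fin 2) (ZMod p))) ≤ 2 := by
  refine orderOf_le_of_pow_eq_one two_pos ?_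
  rw [← QuotientGroup.mk_pow, QuotientGroup.eq_one_iff, Subgroup.mem_center_iff]
  intro g
  ext1
  rw [Units.val_mul, Units.val_mul, Units.val_pow_eq_pow_val, pow_two, hs, mul_smul_comm,
    smul_mul_assoc, mul_one, one_mul]

/-! ### The theorem -/

/-- **(Proposition 3.10(2).)** Let `G` be an N-Cartan lift with respect to `C` with
`dim 𝔤₁ > 1`, and suppose `G(p) ∩ C(p)` contains an element whose image in `PGL₂(𝔽_p)`
has order greater than `2`.  If `dim 𝔤ₙ = 3` for some `n ≥ 1`, then `n = 1` and `G`
contains the principal congruence subgroup `I + p²·M₂(ℤ_p)`. -/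
theorem glDim_eq_three_imp
    (p : ℕ) [Fact p.Prime] (hp : Odd p)
    (G : Subgroup (GL (Fin 2) ℤ_[p]))
    (C Cplus : Set (GL (Fin 2) ℤ_[p]))
    (hC : (C = cspSet ℤ_[p] ∧ Cplus = cspPlusSet ℤ_[p]) ∨
          (C = cnsSet ℤ_[p] ((epsN p : ℤ_[p])) ∧ Cplus = cnsPlusSet ℤ_[p] ((epsN p : ℤ_[p]))))
    (hG : IsNCartanLift p G C Cplus)
    (hdim : 1 < glDim p 1 G)
    (hord : HasLargeOrderElt p G C)
    (n : ℕ) (hn : 1 ≤ n) (h3 : glDim p n G = 3) :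
    n = 1 ∧
    ∀ B : Matrix (Fin 2) (Fin 2) ℤ_[p], ∃ A ∈ G,
      (A : Matrix (Fin 2) (Fin 2) ℤ_[p]) = 1 + ((p : ℤ_[p]) ^ 2) • B := by
  obtain ⟨hclosed, hdet, hsub, hnsub, -⟩ := hG
  have h2 := two_ne_zero_zmod p hp
  obtain ⟨T₀, δ₀, hδ₀, hT₀, hCform, hCplus⟩ := cartan_data p hp hC
  have hform : ∀ g ∈ G, (∃ t y : ZMod p,
      (red p g : Matrix (Fin 2) (Fin 2) (ZMod p)) = t • 1 + y • T₀) ∨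
      (red p g : Matrix (Fin 2) (Fin 2) (ZMod p)) * T₀ = -(T₀ * red p g) := by
    intro g hg
    obtain ⟨k, hk, hkg⟩ := hsub ⟨g, hg, rfl⟩
    rw [← hkg]
    exact (hCplus k hk).imp (hCform k) id
  have hpow : ∀ A ∈ G, red p A ^ (2 * (p ^ 2 - 1)) = 1 := by
    intro A hA
    rcases hform A hA with ⟨t, y, hty⟩ | hanti
    · rw [mul_comm, pow_mul, pow_eq_one_of_cartan p hp hδ₀ hT₀ _ hty, one_pow]
    · rw [pow_mul]
      refine pow_eq_one_of_cartan p hp hδ₀ hT₀ _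
        (t := -(red p A : Matrix (Fin 2) (Fin 2) (ZMod p)).det) (y := 0) ?_
      rw [Units.val_pow_eq_pow_val, pow_two, (sq_scalar_of_anticomm h2 hδ₀ hT₀ hanti).2, zero_smul,
        add_zero]
  -- An element `h` of `G(p)` outside `C(p)`.
  obtain ⟨gh, hghG, hanti₀⟩ : ∃ g ∈ G,
      (red p g : Matrix (Fin 2) (Fin 2) (ZMod p)) * T₀ = -(T₀ * red p g) := by
    rw [Set.not_subset] at hnsub
    obtain ⟨-, ⟨g, hg, rfl⟩, hgC⟩ := hnsub
    obtain ⟨k, hk, hkg⟩ := hsub ⟨g, hg, rfl⟩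
    refine ⟨g, hg, ?_⟩
    rw [← hkg]
    exact (hCplus k hk).resolve_left fun hkC => hgC ⟨k, hkC, hkg⟩
  -- An element `c = t + T` of `G(p) ∩ C(p)` of projective order greater than `2`.
  obtain ⟨-, ⟨⟨gc, hgcG, rfl⟩, ⟨k, hkC, hkc⟩⟩, hord2⟩ := hord
  obtain ⟨t, y, hty⟩ := hCform k hkC
  rw [hkc] at hty
  have hty0 : t * y ≠ 0 := by
    intro h0
    refine absurd hord2 (not_lt.2 (orderOf_le_two_of_sq_scalar p _ (s := t ^ 2 + y ^ 2 * δ₀) ?_))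
    rw [hty]
    simp only [mul_add, add_mul, mul_smul_comm, smul_mul_assoc, mul_one, one_mul, hT₀]
    match_scalars
    · ring
    · linear_combination 2 * h0
  have ht : t ≠ 0 := left_ne_zero_of_mul hty0
  have hy : y ≠ 0 := right_ne_zero_of_mul hty0
  set T := y • T₀ with hTdef
  set δ := y ^ 2 * δ₀ with hδdef
  have hδ : δ ≠ 0 := mul_ne_zero (pow_ne_zero 2 hy) hδ₀
  have hT : T * T = δ • 1 := by
    rw [hTdef, smul_mul_smul_comm, hT₀, smul_smul, hδdef, pow_two]
  set h := red p gh with hhdef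
  set c := red p gc with hcdef
  have hTh : (h : Matrix (Fin 2) (Fin 2) (ZMod p)) * T = -(T * h) := by
    rw [hTdef, mul_smul_comm, hanti₀, smul_mul_assoc, smul_neg]
  obtain ⟨htrh, hhsq⟩ := sq_scalar_of_anticomm h2 hδ hT hTh
  set η := -(h : Matrix (Fin 2) (Fin 2) (ZMod p)).det with hηdef
  have hη : η ≠ 0 := by
    rw [hηdef]
    exact neg_ne_zero.2 ((Matrix.isUnit_iff_isUnit_det _).1 h.isUnit).ne_zero
  have hspan := quaternion_span h2 hδ hη hT hhsq hTh
  have hdecomp : ∀ {m : ℕ} (hm : 1 ≤ m) {x y a b : ZMod p},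
      x • 1 + y • T + a • (h : Matrix (Fin 2) (Fin 2) (ZMod p)) + b • (T * h) ∈ glSub p hm G →
      x • 1 ∈ glSub p hm G ∧ y • T ∈ glSub p hm G ∧ ((a ≠ 0 ∨ b ≠ 0) →
        (h : Matrix (Fin 2) (Fin 2) (ZMod p)) ∈ glSub p hm G ∧
        T * (h : Matrix (Fin 2) (Fin 2) (ZMod p)) ∈ glSub p hm G) :=
    fun {_} hm {_ _ _ _} => stable_decomp h2 h c hδ ht hT hTh hty (glSub p hm G)
      (fun _ hw => glSet_conj p hghG hw) (fun _ hw => glSet_conj p hgcG hw)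
  have hscale : ∀ {m : ℕ} (hm : 1 ≤ m) {r : ZMod p} {M : Matrix (Fin 2) (Fin 2) (ZMod p)}, r ≠ 0 →
      r • M ∈ glSub p hm G → M ∈ glSub p hm G :=
    fun {_} hm {_ _} hr hM => ((glSub p hm G).smul_mem_iff hr).1 hM
  have hfull : ∀ {m : ℕ} (hm : 1 ≤ m), 1 ∈ glSub p hm G → T ∈ glSub p hm G →
      (h : Matrix (Fin 2) (Fin 2) (ZMod p)) ∈ glSub p hm G →
      T * (h : Matrix (Fin 2) (Fin 2) (ZMod p)) ∈ glSub p hm G → ∀ M, M ∈ glSub p hm G := by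
    intro m hm k1 k2 k3 k4 M
    obtain ⟨x, y, a, b, rfl⟩ := hspan M
    exact add_mem (add_mem (add_mem (Submodule.smul_mem _ _ k1) (Submodule.smul_mem _ _ k2))
      (Submodule.smul_mem _ _ k3)) (Submodule.smul_mem _ _ k4)
  have hnotfull : ¬ ∀ M, M ∈ glSub p hn G := by
    intro hall
    rw [glDim_eq p hn, Submodule.eq_top_iff'.2 hall, finrank_top] at h3
    simp [Module.finrank_matrix] at h3
  rw [glDim_eq p le_rfl] at hdim
  rw [glDim_eq p hn] at h3
  have hmono : ∀ {m k : ℕ} (hm : 1 ≤ m) (hk : 1 ≤ k), m ≤ k →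
      ∀ {M : Matrix (Fin 2) (Fin 2) (ZMod p)}, M ∈ glSub p hm G → M ∈ glSub p hk G :=
    fun {_ _} hm _ hmk {_} hM => glSet_mono p hp hm hmk hM
  -- The trace of `x + yT + ah + bTh` is `2x`, so scalars lie in `𝔤₁`.
  have hone : 1 ∈ glSub p le_rfl G := by
    obtain ⟨M, hM, hMtr⟩ := exists_trace_ne_zero p hp hdet hpow
    obtain ⟨x, y', a, b, rfl⟩ := hspan M
    refine hscale le_rfl (r := x) ?_ (hdecomp le_rfl hM).1
    rintro rfl
    apply hMtr
    have htrT : T.trace = 0 := (sq_scalar_of_anticomm h2 hη hhsq (T := h) (h := T)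
      (by rw [hTh, neg_neg])).1
    have htrTh : (T * (h : Matrix (Fin 2) (Fin 2) (ZMod p))).trace = 0 := by
      have e : (T * (h : Matrix (Fin 2) (Fin 2) (ZMod p))).trace =
          -(T * (h : Matrix (Fin 2) (Fin 2) (ZMod p))).trace := by
        conv_lhs => rw [Matrix.trace_mul_comm, hTh, Matrix.trace_neg]
      have : 2 * (T * (h : Matrix (Fin 2) (Fin 2) (ZMod p))).trace = 0 := by
        linear_combination e
      exact (mul_eq_zero.1 this).resolve_left h2
    simp [Matrix.trace_add, htrT, htrTh, htrh]
  have hh1 : (h : Matrix (Fin 2) (Fin 2) (ZMod p)) ∈ glSub p le_rfl G ∧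
      T * (h : Matrix (Fin 2) (Fin 2) (ZMod p)) ∈ glSub p le_rfl G := by
    by_contra hno
    -- Then `𝔤₁` lies in `𝔽_p + 𝔽_p·T`, so it contains `T`.
    have hT1 : T ∈ glSub p le_rfl G := by
      by_contra hT1
      have hle : glSub p le_rfl G ≤
          Submodule.span (ZMod p) {(1 : Matrix (Fin 2) (Fin 2) (ZMod p))} := by
        intro M hM
        obtain ⟨x, y', a, b, rfl⟩ := hspan M
        obtain ⟨-, m2, m3⟩ := hdecomp le_rfl hM
        have hab := mt m3 hno
        push Not at hab
        have hy' : y' = 0 := by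
          by_contra hy'
          exact hT1 (hscale le_rfl hy' m2)
        rw [hab.1, hab.2, hy']
        simpa using Submodule.smul_mem _ x (Submodule.mem_span_singleton_self _)
      have k1 := Submodule.finrank_mono hle
      have k2 := finrank_span_singleton (K := ZMod p)
        (one_ne_zero : (1 : Matrix (Fin 2) (Fin 2) (ZMod p)) ≠ 0)
      omega
    -- Hence `𝔤ₙ`, of dimension `3`, strictly contains `𝔽_p + 𝔽_p·T` and is everything.
    have hex : ∃ M ∈ glSub p hn G, M ∉ Submodule.span (ZMod p) {1, T} := by
      by_contra! hle
      have k1 := Submodule.finrank_mono (show glSub p hn G ≤ _ from hle)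
      have k2 := finrank_span_finset_le_card (R := ZMod p) ({1, T} : Finset _)
      have k3 := Finset.card_le_two (a := (1 : Matrix (Fin 2) (Fin 2) (ZMod p))) (b := T)
      rw [Set.finrank] at k2
      rw [Finset.coe_insert, Finset.coe_singleton] at k2
      omega
    obtain ⟨M, hM, hMs⟩ := hex
    obtain ⟨x, y', a, b, rfl⟩ := hspan M
    have hab : a ≠ 0 ∨ b ≠ 0 := by
      by_contra! hab
      apply hMs
      rw [hab.1, hab.2, zero_smul, zero_smul, add_zero, add_zero]
      exact Submodule.mem_span_pair.2 ⟨x, y', rfl⟩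
    obtain ⟨k3, k4⟩ := (hdecomp hn hM).2.2 hab
    exact hnotfull (hfull hn (hmono le_rfl hn hn hone) (hmono le_rfl hn hn hT1) k3 k4)
  -- `[h, Th] = -2ηT` lies in `𝔤₂`.
  have hT2 : T ∈ glSub p one_le_two G := by
    refine hscale one_le_two (r := -(2 * η)) (neg_ne_zero.2 (mul_ne_zero h2 hη)) ?_
    have e := glSet_commutator p hh1.1 hh1.2
    have e' : (h : Matrix (Fin 2) (Fin 2) (ZMod p)) * (T * h) - T * h * h = (-(2 * η)) • T := by
      rw [← mul_assoc, hTh, neg_mul, mul_assoc, hhsq, mul_smul_comm, mul_one]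
      module
    rw [e'] at e
    exact e
  have hall : ∀ k, 2 ≤ k → ∀ M, M ∈ glSet p k G := by
    intro k hk M
    have hk1 : 1 ≤ k := one_le_two.trans hk
    exact hfull hk1 (hmono le_rfl hk1 hk1 hone) (hmono one_le_two hk1 hk hT2)
      (hmono le_rfl hk1 hk1 hh1.1) (hmono le_rfl hk1 hk1 hh1.2) M
  refine ⟨?_, congruence_of_full p hclosed one_le_two hall⟩
  by_contra hn1
  exact hnotfull fun M => hall n (by omega) M

end
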